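/- Let A be a unique representation basis of the integers and let n be a positive integer. For each integer ℓ with 1 ≤ ℓ ≤ n, let N_ℓ be the number of elements of A in the interval ((ℓ−1)n, ℓn]. Then ∑_{ℓ=1}^{n} N_ℓ² < 5n. -/

import Mathlib

open Filter Set

/-- `repCount A n` is the number of representations of `n` as `a + a'` with
`a ≤ a'` and `a, a' ∈ A`. -/
noncomputable def repCount (A : Set ℤ) (n : ℤ) : ℕ :=
  {p : ℤ × ℤ | p.1 ∈ A ∧ p.2 ∈ A ∧ p.1 ≤ p.2 ∧ p.1 + p.2 = n}.ncard

/-- `A` is a unique representation basis of `ℤ` if `r_A(n) = 1` for all `n`. -/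
def IsUniqueRepBasis (A : Set ℤ) : Prop := ∀ n : ℤ, repCount A n = 1

/-- `countIn A y x` is the number of elements of `A` in the real interval `[y, x]`. -/
noncomputable def countIn (A : Set ℤ) (y x : ℝ) : ℕ :=
  {a : ℤ | a ∈ A ∧ y ≤ (a : ℝ) ∧ (a : ℝ) ≤ x}.ncard

/-!
In a Sidon set the difference `a - b` determines the pair `(a, b)` once `a ≠ b`. If disjoint blocks
of the set have diameter less than `n`, the ordered pairs of distinct elements of a common block
therefore inject into the nonzero integers of absolute value less than `n`, so that
`∑ N_ℓ (N_ℓ - 1) ≤ 2 (n - 1)`. The inequality `2 N² ≤ 3 N (N - 1) + 2`, that is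
`0 ≤ (N - 1) (N - 2)`, turns this into a bound for `∑ N_ℓ²`.
-/

/-- A Sidon set (`B₂` set): sums of two elements are distinct up to the order of the summands. -/
def IsSidon {M : Type*} [Add M] (A : Set M) : Prop :=
  ∀ ⦃a⦄, a ∈ A → ∀ ⦃b⦄, b ∈ A → ∀ ⦃c⦄, c ∈ A → ∀ ⦃d⦄, d ∈ A →
    a + b = c + d → (a = c ∧ b = d) ∨ (a = d ∧ b = c)

theorem IsUniqueRepBasis.isSidon {A : Set ℤ} (hA : IsUniqueRepBasis A) : IsSidon A := by
  intro a ha b hb c hc d hd hsum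
  obtain ⟨p, hp⟩ := Set.ncard_eq_one.mp (hA (a + b))
  have min_max_eq {x y : ℤ} (hx : x ∈ A) (hy : y ∈ A) (hxy : x + y = a + b) :
      (min x y, max x y) = p := by
    have hmem : (min x y, max x y) ∈ ({p} : Set (ℤ × ℤ)) := by
      rw [← hp]
      exact ⟨min_rec' (· ∈ A) hx hy, max_rec' (· ∈ A) hx hy, min_le_max,
        (min_add_max x y).trans hxy⟩
    exact hmem
  have heq : (min a b, max a b) = (min c d, max c d) :=
    (min_max_eq ha hb rfl).trans (min_max_eq hc hd hsum.symm).symm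
  rw [Prod.mk.injEq] at heq
  omega

namespace IsSidon

variable {G : Type*} [AddCommGroup G] {A : Set G}

theorem injOn_sub_offDiag (hA : IsSidon A) : InjOn (fun p : G × G ↦ p.1 - p.2) A.offDiag := by
  rintro ⟨a, b⟩ ⟨ha, hb, hab⟩ ⟨c, d⟩ ⟨hc, hd, -⟩ hsub
  rcases hA ha hd hc hb (sub_eq_sub_iff_add_eq_add.mp hsub) with ⟨hac, hdb⟩ | ⟨hab', -⟩
  · exact Prod.ext hac hdb.symm
  · exact absurd hab' hab

theorem sum_card_offDiag_le {ι : Type*} {s : Finset ι} {F : ι → Finset G} {D : Finset G}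
    (hA : IsSidon A) (hFA : ∀ i ∈ s, (F i : Set G) ⊆ A) (hF : (s : Set ι).PairwiseDisjoint F)
    (hD : ∀ i ∈ s, ∀ p ∈ (F i).offDiag, p.1 - p.2 ∈ D) :
    ∑ i ∈ s, (F i).offDiag.card ≤ D.card := by
  classical
  have hdisj : (s : Set ι).PairwiseDisjoint fun i ↦ (F i).offDiag := fun i hi j hj hij ↦ by
    rw [Function.onFun, Finset.disjoint_iff_inter_eq_empty, ← Finset.offDiag_inter,
      Finset.disjoint_iff_inter_eq_empty.mp (hF hi hj hij), Finset.offDiag_empty]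
  rw [← Finset.card_biUnion hdisj]
  refine Finset.card_le_card_of_injOn (fun p ↦ p.1 - p.2) ?_ (hA.injOn_sub_offDiag.mono ?_)
  · intro p hp
    obtain ⟨i, hi, hpi⟩ := Finset.mem_biUnion.mp hp
    exact hD i hi p hpi
  · intro p hp
    obtain ⟨i, hi, hpi⟩ := Finset.mem_biUnion.mp hp
    exact Set.offDiag_mono (hFA i hi) (Finset.coe_offDiag (F i) ▸ hpi)

end IsSidon

theorem two_mul_card_sq_le_three_mul_card_offDiag_add_two {α : Type*} (s : Finset α) :
    2 * s.card ^ 2 ≤ 3 * s.offDiag.card + 2 := by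
  rw [Finset.offDiag_card]
  cases s.card with
  | zero => simp
  | succ k =>
    have hsub : (k + 1) * (k + 1) - (k + 1) = k * (k + 1) := by
      rw [← Nat.sub_one_mul, Nat.add_sub_cancel]
    rw [hsub]
    linarith [Nat.le_mul_self k]

theorem IsSidon.sum_card_sq_lt {ι : Type*} {s : Finset ι} {F : ι → Finset ℤ} {A : Set ℤ} {n : ℕ}
    (hA : IsSidon A) (hn : 0 < n) (hFA : ∀ i ∈ s, (F i : Set ℤ) ⊆ A)
    (hF : (s : Set ι).PairwiseDisjoint F) (hdiam : ∀ i ∈ s, ∀ a ∈ F i, ∀ b ∈ F i, a - b < n) :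
    ∑ i ∈ s, (F i).card ^ 2 < 3 * n + s.card := by
  have hpairs : ∑ i ∈ s, (F i).offDiag.card ≤ 2 * (n - 1) := by
    calc
      _ ≤ ((Finset.Ioo (-n : ℤ) n).erase 0).card := by
        refine hA.sum_card_offDiag_le hFA hF fun i hi p hp ↦ ?_
        obtain ⟨ha, hb, hab⟩ := Finset.mem_offDiag.mp hp
        have hlt := hdiam i hi p.1 ha p.2 hb
        have hgt := hdiam i hi p.2 hb p.1 ha
        rw [Finset.mem_erase, Finset.mem_Ioo]
        omega
      _ = 2 * (n - 1) := by
        rw [Finset.card_erase_of_mem (by simpa using hn), Int.card_Ioo]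
        omega
  have hsq : 2 * ∑ i ∈ s, (F i).card ^ 2 ≤ 3 * ∑ i ∈ s, (F i).offDiag.card + 2 * s.card := by
    calc
      _ = ∑ i ∈ s, 2 * (F i).card ^ 2 := Finset.mul_sum ..
      _ ≤ ∑ i ∈ s, (3 * (F i).offDiag.card + 2) :=
        Finset.sum_le_sum fun i _ ↦ two_mul_card_sq_le_three_mul_card_offDiag_add_two (F i)
      _ = _ := by
        rw [Finset.sum_add_distrib, ← Finset.mul_sum, Finset.sum_const, smul_eq_mul, mul_comm 2]
  omega

theorem urb_sum_sq_lt_general {A : Set ℤ} (hA : IsSidon A) {n : ℕ} (hn : 0 < n) (s : Finset ℤ) :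
    ∑ ℓ ∈ s, (A ∩ Ioc ((ℓ - 1) * n) (ℓ * n)).ncard ^ 2 < 3 * n + s.card := by
  have hmono : Monotone fun ℓ : ℤ ↦ ℓ * (n : ℤ) :=
    fun _ _ h ↦ mul_le_mul_of_nonneg_right h n.cast_nonneg
  have hfin (ℓ : ℤ) : (A ∩ Ioc ((ℓ - 1) * n) (ℓ * n)).Finite := (finite_Ioc _ _).inter_of_right A
  simp only [fun ℓ ↦ ncard_eq_toFinset_card _ (hfin ℓ)]
  refine hA.sum_card_sq_lt hn (fun ℓ _ ↦ ?_) (fun ℓ _ m _ hne ↦ ?_) fun ℓ _ a ha b hb ↦ ?_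
  · simp
  · exact Finite.disjoint_toFinset.mpr <| (hmono.pairwise_disjoint_on_Ioc_pred hne).mono
      inter_subset_right inter_subset_right
  · obtain ⟨-, -, ha⟩ := (hfin ℓ).mem_toFinset.mp ha
    obtain ⟨-, hb, -⟩ := (hfin ℓ).mem_toFinset.mp hb
    linarith

/-- For a unique representation basis, `∑_{ℓ=1}^{n} N_ℓ² < 5n`. -/
theorem urb_sum_sq_lt (A : Set ℤ) (hA : IsUniqueRepBasis A) (n : ℕ) (hn : 0 < n)
    (N : ℕ → ℕ)
    (hN : ∀ ℓ : ℕ, N ℓ = {a : ℤ | a ∈ A ∧ ((ℓ : ℤ) - 1) * n < a ∧ a ≤ (ℓ : ℤ) * n}.ncard) :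
    ∑ ℓ ∈ Finset.Icc 1 n, (N ℓ) ^ 2 < 5 * n := by
  have h := urb_sum_sq_lt_general hA.isSidon hn ((Finset.Icc 1 n).map Nat.castEmbedding)
  simp only [Finset.sum_map, Finset.card_map, Nat.card_Icc, Nat.castEmbedding_apply] at h
  simp only [hN]
  exact h.trans_le (by omega)
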